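/- Let $f:\mathbb{D}\to\mathbb{D}$ be injective holomorphic with $f(0)=0$, $w\in\mathbb{D}\setminus\{0\}$, and define $I_{upper}(f,w) = \log\left[\frac{|f(w)|}{(1-|f(w)|)^2}\cdot\frac{(1-|w|)^2}{|w|\,|f'(0)|}\right]$. Then $I_{upper}(f,w)\leq 0$. -/

import Mathlib

open Complex Metric

open MeasureTheory Set Filter Topology

/-- Polar coordinates on a rotation-invariant set. -/
theorem setLIntegral_norm_preimage_eq_polar {T : Set ℝ} (hT : MeasurableSet T)
    (hT0 : T ⊆ Ioi 0) (F : ℂ → ENNReal)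
    (hF : Measurable ({z : ℂ | ‖z‖ ∈ T}.indicator F)) :
    ∫⁻ z in {z : ℂ | ‖z‖ ∈ T}, F z =
      ∫⁻ r in T, ENNReal.ofReal r * ∫⁻ θ in Ioo (-Real.pi) Real.pi, F (circleMap 0 r θ) := by
  have hS : MeasurableSet {z : ℂ | ‖z‖ ∈ T} := measurable_norm hT
  set G := {z : ℂ | ‖z‖ ∈ T}.indicator F with hG
  have hpol : ∀ p : ℝ × ℝ, Complex.polarCoord.symm p = circleMap 0 p.1 p.2 := fun p => by
    simp [circleMap, Complex.exp_mul_I]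
  have hmeas : Measurable fun p : ℝ × ℝ => ENNReal.ofReal p.1 * G (circleMap 0 p.1 p.2) := by
    refine (ENNReal.measurable_ofReal.comp measurable_fst).mul (hF.comp ?_)
    unfold circleMap
    fun_prop
  rw [← lintegral_indicator hS, ← Complex.lintegral_comp_polarCoord_symm]
  simp only [hpol, smul_eq_mul, polarCoord_target]
  rw [Measure.volume_eq_prod, setLIntegral_prod _ hmeas.aemeasurable]
  have hinner : ∀ r ∈ Ioi (0 : ℝ),
      ∫⁻ θ in Ioo (-Real.pi) Real.pi, ENNReal.ofReal r * G (circleMap 0 r θ) =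
      T.indicator (fun r => ENNReal.ofReal r *
        ∫⁻ θ in Ioo (-Real.pi) Real.pi, F (circleMap 0 r θ)) r := by
    intro r hr
    rw [lintegral_const_mul' _ _ ENNReal.ofReal_ne_top]
    have hn : ∀ θ, ‖circleMap 0 r θ‖ = r := fun θ => by simp [abs_of_pos hr.out]
    by_cases h : r ∈ T
    · rw [indicator_of_mem h]
      have : ∀ θ, G (circleMap 0 r θ) = F (circleMap 0 r θ) := fun θ =>
        indicator_of_mem (by simpa only [mem_ofPred_eq, hn] using h) _
      simp only [this]
    · rw [indicator_of_notMem h]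
      have : ∀ θ, G (circleMap 0 r θ) = 0 := fun θ =>
        indicator_of_notMem (by simpa only [mem_ofPred_eq, hn] using h) _
      simp [this]
  rw [setLIntegral_congr_fun measurableSet_Ioi hinner, setLIntegral_indicator hT,
    inter_eq_left.2 hT0]

/-- Change of variables for an injective holomorphic map. -/
theorem lintegral_image_eq_lintegral_norm_deriv_sq_mul {s : Set ℂ} {g g' : ℂ → ℂ}
    (hs : MeasurableSet s) (hg : ∀ z ∈ s, HasDerivAt g (g' z) z) (hinj : InjOn g s)
    (F : ℂ → ENNReal) :
    ∫⁻ w in g '' s, F w = ∫⁻ z in s, ENNReal.ofReal (‖g' z‖ ^ 2) * F (g z) := by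
  rw [lintegral_image_eq_lintegral_abs_det_fderiv_mul volume hs
    (fun z hz => ((hg z hz).hasFDerivAt.restrictScalars ℝ).hasFDerivWithinAt) hinj]
  simp [ContinuousLinearMap.det, LinearMap.det_restrictScalars,
      Algebra.norm_complex_eq, Complex.normSq_eq_norm_sq]


/-- The integral of `‖w‖ ^ (-2 * α - 2)` outside a disc. -/
theorem setLIntegral_norm_rpow {α m : ℝ} (hα : 0 < α) (hm : 0 < m) :
    ∫⁻ w in {w : ℂ | ‖w‖ ∈ Ici m}, ENNReal.ofReal (‖w‖ ^ (-2 * α - 2)) =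
      ENNReal.ofReal (2 * Real.pi * (m ^ (-2 * α) / (2 * α))) := by
  have hsub : Ici m ⊆ Ioi 0 := fun x hx => hm.trans_le hx
  rw [setLIntegral_norm_preimage_eq_polar measurableSet_Ici hsub _
    (Measurable.indicator (by fun_prop) (measurable_norm measurableSet_Ici))]
  have hcongr : ∀ r ∈ Ici m, ENNReal.ofReal r * ∫⁻ θ in Ioo (-Real.pi) Real.pi,
      ENNReal.ofReal (‖circleMap 0 r θ‖ ^ (-2 * α - 2)) =
      ENNReal.ofReal (2 * Real.pi * r ^ (-2 * α - 1)) := by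
    intro r hr
    have hr0 : 0 < r := hsub hr
    simp only [norm_circleMap_zero, abs_of_pos hr0, lintegral_const, Measure.restrict_apply_univ,
      Real.volume_Ioo]
    rw [← ENNReal.ofReal_mul (by positivity), ← ENNReal.ofReal_mul hr0.le,
      show -2 * α - 1 = (-2 * α - 2) + 1 by ring, Real.rpow_add_one hr0.ne']
    ring_nf
  rw [setLIntegral_congr_fun measurableSet_Ici hcongr, setLIntegral_congr Ioi_ae_eq_Ici.symm,
    ← ofReal_integral_eq_lintegral_ofReal
      ((integrableOn_Ioi_rpow_of_lt (by linarith) hm).const_mul _), integral_const_mul,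
    integral_Ioi_rpow_of_lt (by linarith) hm]
  · congr 2
    rw [show -2 * α - 1 + 1 = -(2 * α) by ring, neg_div_neg_eq, neg_mul]
  · exact (ae_restrict_iff' measurableSet_Ioi).2 (ae_of_all _ fun x hx => by
      have : 0 < x := hm.trans hx
      positivity)

/-- A lower bound for `‖g‖` on a circle gives a disc covered by the image. -/
theorem ball_subset_image_ball {g : ℂ → ℂ} {ρ m : ℝ} (hρ : 0 < ρ) (hρ1 : ρ < 1) (hm0 : 0 < m)
    (hd : DifferentiableOn ℂ g (ball 0 1)) (hinj : InjOn g (ball 0 1)) (h0 : g 0 = 0)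
    (hm : ∀ z ∈ sphere (0 : ℂ) ρ, m ≤ ‖g z‖) : ball 0 m ⊆ g '' ball 0 ρ := by
  have hsub : closedBall (0 : ℂ) ρ ⊆ ball 0 1 := closedBall_subset_ball hρ1
  have hopen : IsOpen (g '' ball 0 ρ) := by
    rcases (hd.analyticOnNhd isOpen_ball).is_constant_or_isOpen
      (convex_ball (0 : ℂ) 1).isPreconnected with ⟨w, hw⟩ | h
    · have h2 : ((ρ : ℝ) : ℂ) ∈ ball (0 : ℂ) 1 := hsub (by simp [abs_of_pos hρ])
      have h3 := hinj h2 (mem_ball_self one_pos)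
        ((hw _ h2).trans (hw 0 (mem_ball_self one_pos)).symm)
      exact absurd (by exact_mod_cast h3) hρ.ne'
    · exact h _ (ball_subset_ball hρ1.le) isOpen_ball
  refine (convex_ball (0 : ℂ) m).isPreconnected.subset_of_closure_inter_subset hopen
    ⟨0, mem_ball_self hm0, 0, mem_ball_self hρ, h0⟩ ?_
  rintro w ⟨hw, hwm⟩
  have hcl : IsClosed (g '' closedBall 0 ρ) :=
    ((isCompact_closedBall 0 ρ).image_of_continuousOn (hd.continuousOn.mono hsub)).isClosed
  obtain ⟨z, hz, rfl⟩ := closure_minimal (image_mono ball_subset_closedBall) hcl hw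
  refine ⟨z, mem_ball.2 (lt_of_le_of_ne hz fun h => ?_), rfl⟩
  exact absurd (hm z h) (not_le.2 (by simpa using hwm))

/-- The first two terms of Parseval's identity bound the mean square on a circle from below. -/
theorem le_lintegral_norm_sq_circleMap {P : ℂ → ℂ} (hP : DifferentiableOn ℂ P (ball 0 1))
    (hP0 : P 0 = 1) {r : ℝ} (hr : 0 < r) (hr1 : r < 1) :
    ENNReal.ofReal (2 * Real.pi * (1 + r ^ 2 * ‖deriv P 0‖ ^ 2)) ≤
      ∫⁻ θ in Ioo (-Real.pi) Real.pi, ENNReal.ofReal (‖P (circleMap 0 r θ)‖ ^ 2) := by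
  set D := dslope P 0 with hD
  set c := deriv P 0 with hc
  have hDd : DifferentiableOn ℂ D (ball 0 1) :=
    (differentiableOn_dslope (ball_mem_nhds 0 one_pos)).2 hP
  have hDc : D 0 = c := dslope_same _ _
  have hPD : ∀ z, P z = 1 + z * D z := fun z => by
    have := sub_smul_dslope P 0 z
    simp only [sub_zero, smul_eq_mul, hP0] at this
    rw [this]; ring
  set K : ℂ → ℂ := fun z => 2 * z * D z + 2 * r ^ 2 * (starRingEnd ℂ) c * D z with hK
  have hKd : DifferentiableOn ℂ K (ball 0 1) := by
    rw [hK]; fun_prop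
  have hcirc : ∀ θ, circleMap 0 r θ ∈ ball (0 : ℂ) 1 := fun θ => by simpa [abs_of_pos hr] using hr1
  have hKcont : Continuous fun θ => K (circleMap 0 r θ) :=
    hKd.continuousOn.comp_continuous (continuous_circleMap 0 r) hcirc
  have hPcont : Continuous fun θ => P (circleMap 0 r θ) :=
    hP.continuousOn.comp_continuous (continuous_circleMap 0 r) hcirc
  have hKre : Continuous fun θ => (K (circleMap 0 r θ)).re := continuous_re.comp hKcont
  have hPsq : Continuous fun θ => ‖P (circleMap 0 r θ)‖ ^ 2 := hPcont.norm.pow 2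
  have hKint : ∫ θ in (-Real.pi)..Real.pi, K (circleMap 0 r θ) = 2 * Real.pi * K 0 := by
    have h1 : Real.circleAverage K 0 r = K 0 := by
      refine DiffContOnCl.circleAverage (DifferentiableOn.diffContOnCl (hKd.mono ?_))
      rw [abs_of_pos hr, closure_ball _ hr.ne']
      exact closedBall_subset_ball hr1
    have hper : Function.Periodic (fun θ => K (circleMap 0 r θ)) (2 * Real.pi) :=
      fun θ => by simp [periodic_circleMap 0 r θ]
    have h2 := hper.intervalIntegral_add_eq (-Real.pi) 0
    rw [show -Real.pi + 2 * Real.pi = Real.pi by ring, zero_add] at h2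
    rw [h2, ← h1, Real.circleAverage_def, Complex.real_smul]
    push_cast
    field_simp
  have hpoint : ∀ θ, 1 - r ^ 2 * ‖c‖ ^ 2 + (K (circleMap 0 r θ)).re ≤
      ‖P (circleMap 0 r θ)‖ ^ 2 := by
    intro θ
    have hn : ‖circleMap 0 r θ‖ ^ 2 = r ^ 2 := by simp
    rw [hPD]
    generalize circleMap 0 r θ = z at hn ⊢
    simp only [hK]
    generalize D z = d
    have hdc : 0 ≤ r ^ 2 * ‖d - c‖ ^ 2 := by positivity
    have hre : (2 * z * d + 2 * (r : ℂ) ^ 2 * (starRingEnd ℂ) c * d).re =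
        2 * (z * d).re + 2 * r ^ 2 * ((starRingEnd ℂ) c * d).re := by
      rw [show 2 * z * d + 2 * (r : ℂ) ^ 2 * (starRingEnd ℂ) c * d =
        ((2 : ℝ) : ℂ) * (z * d) + ((2 * r ^ 2 : ℝ) : ℂ) * ((starRingEnd ℂ) c * d) by
          push_cast; ring]
      rw [add_re, re_ofReal_mul, re_ofReal_mul]
    rw [hre]
    simp only [← hn, Complex.sq_norm, normSq_apply, add_re, add_im, mul_re, mul_im, sub_re, sub_im,
      one_re, one_im, conj_re, conj_im] at hdc ⊢
    linarith
  rw [← ofReal_integral_eq_lintegral_ofReal _ (ae_of_all _ fun _ => by positivity),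
    ← integral_Ioc_eq_integral_Ioo, ← intervalIntegral.integral_of_le (by linarith [Real.pi_pos])]
  · apply ENNReal.ofReal_le_ofReal
    have hre : ∫ θ in (-Real.pi)..Real.pi, (K (circleMap 0 r θ)).re =
        2 * Real.pi * (2 * r ^ 2 * ‖c‖ ^ 2) := by
      have h1 := congrArg Complex.re hKint
      rw [← Complex.reCLM_apply, ← ContinuousLinearMap.intervalIntegral_comp_comm _
        (hKcont.intervalIntegrable _ _)] at h1
      simp only [Complex.reCLM_apply] at h1
      have h2 : 2 * (Real.pi : ℂ) * K 0 = ((2 * Real.pi * (2 * r ^ 2 * ‖c‖ ^ 2) : ℝ) : ℂ) := by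
        have h3 : (starRingEnd ℂ) c * c = (‖c‖ : ℂ) ^ 2 := Complex.conj_mul' c
        simp only [hK, hDc]
        push_cast
        linear_combination (4 * (Real.pi : ℂ) * r ^ 2) * h3
      rw [h1, h2, ofReal_re]
    calc _ = ∫ θ in (-Real.pi)..Real.pi, (1 - r ^ 2 * ‖c‖ ^ 2 + (K (circleMap 0 r θ)).re) := by
          rw [intervalIntegral.integral_add (by simp) (hKre.intervalIntegrable _ _), hre]
          simp
          ring
      _ ≤ _ := by
          refine intervalIntegral.integral_mono_on (by linarith [Real.pi_pos])
            ((continuous_const.add hKre).intervalIntegrable _ _)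
            (hPsq.intervalIntegrable _ _) fun θ _ => hpoint θ
  · exact hPsq.integrableOn_Icc.mono_set Ioo_subset_Icc_self

/-- A normalized univalent function has the form `z * exp (L z)`. -/
theorem exists_eq_mul_exp {g : ℂ → ℂ} (hd : DifferentiableOn ℂ g (ball 0 1))
    (hinj : InjOn g (ball 0 1)) (h0 : g 0 = 0) (h1 : deriv g 0 = 1) :
    ∃ L : ℂ → ℂ, DifferentiableOn ℂ L (ball 0 1) ∧ L 0 = 0 ∧
      ∀ z ∈ ball (0 : ℂ) 1, g z = z * exp (L z) := by
  have h0mem : (0 : ℂ) ∈ ball (0 : ℂ) 1 := mem_ball_self one_pos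
  set q := dslope g 0 with hq
  have hgq : ∀ z, g z = z * q z := fun z => by
    have := sub_smul_dslope g 0 z
    simp only [sub_zero, smul_eq_mul, h0] at this
    rw [this]
  have hqd : DifferentiableOn ℂ q (ball 0 1) :=
    (differentiableOn_dslope (ball_mem_nhds 0 one_pos)).2 hd
  have hq0 : q 0 = 1 := (dslope_same _ _).trans h1
  have hqne : ∀ z ∈ ball (0 : ℂ) 1, q z ≠ 0 := by
    intro z hz h
    have hz0 : z = 0 := hinj hz h0mem (by rw [hgq, h, h0, mul_zero])
    rw [hz0, hq0] at h
    exact one_ne_zero h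
  have hlog : DifferentiableOn ℂ (fun z => deriv q z / q z) (ball 0 1) :=
    (hqd.deriv isOpen_ball).div hqd hqne
  obtain ⟨L, hL0, hL⟩ := hlog.isExactOn_ball.with_val_at 0 0
  refine ⟨L, fun z hz => (hL z hz).differentiableAt.differentiableWithinAt, hL0, fun z hz => ?_⟩
  have hder : ∀ z ∈ ball (0 : ℂ) 1, HasDerivAt (fun z => q z * exp (-L z)) 0 z := by
    intro z hz
    have hqz := (hqd.differentiableAt (isOpen_ball.mem_nhds hz)).hasDerivAt
    convert! hqz.mul (hL z hz).neg.cexp using 1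
    have := hqne z hz
    field_simp
    ring
  have hconst := isOpen_ball.is_const_of_deriv_eq_zero (convex_ball (0 : ℂ) 1).isPreconnected
    (fun z hz => (hder z hz).differentiableAt.differentiableWithinAt)
    (fun z hz => (hder z hz).deriv) hz h0mem
  simp only [hL0, hq0, neg_zero, exp_zero, mul_one] at hconst
  rw [hgq, ← one_mul (exp (L z)), ← hconst, mul_assoc, ← exp_add, neg_add_cancel, exp_zero, mul_one]

/-- The area theorem for the power `g ^ (-α)`, restricted to the annulus `ρ < ‖z‖ < 1`. -/
theorem area_inequality {g L : ℂ → ℂ} (hd : DifferentiableOn ℂ g (ball 0 1))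
    (hinj : InjOn g (ball 0 1)) (hL : DifferentiableOn ℂ L (ball 0 1)) (hL0 : L 0 = 0)
    (hgL : ∀ z ∈ ball (0 : ℂ) 1, g z = z * exp (L z)) {α ρ m : ℝ} (hα : 0 < α) (hα1 : α < 1)
    (hρ : 0 < ρ) (hρ1 : ρ < 1) (hm0 : 0 < m) (hm : ∀ z ∈ sphere (0 : ℂ) ρ, m ≤ ‖g z‖) :
    α * (1 - α) * ‖deriv L 0‖ ^ 2 * (1 - ρ ^ (2 - 2 * α)) ≤
      1 + (m ^ (-2 * α) - ρ ^ (-2 * α)) := by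
  have h0mem : (0 : ℂ) ∈ ball (0 : ℂ) 1 := mem_ball_self one_pos
  set P : ℂ → ℂ := fun z => exp (-α * L z) * (1 + z * deriv L z) with hP
  have hL' : DifferentiableOn ℂ (deriv L) (ball 0 1) := hL.deriv isOpen_ball
  have hPd : DifferentiableOn ℂ P (ball 0 1) := by
    rw [hP]; fun_prop
  have hP0 : P 0 = 1 := by simp [hP, hL0]
  have hP' : deriv P 0 = ((1 - α : ℝ) : ℂ) * deriv L 0 := by
    have e1 := (hL.differentiableAt (isOpen_ball.mem_nhds h0mem)).hasDerivAt
    have e2 := (hL'.differentiableAt (isOpen_ball.mem_nhds h0mem)).hasDerivAt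
    have e3 := ((e1.const_mul (-α : ℂ)).cexp).mul (((hasDerivAt_id (0 : ℂ)).mul e2).const_add 1)
    rw [show P = _ from rfl]
    refine e3.deriv.trans ?_
    simp [hL0]
    ring
  set S : Set ℂ := {z : ℂ | ‖z‖ ∈ Ioo ρ 1} with hS
  have hSm : MeasurableSet S := measurable_norm measurableSet_Ioo
  have hSball : S ⊆ ball 0 1 := fun z hz => by simpa using hz.2
  set F : ℂ → ENNReal := fun z => ENNReal.ofReal (‖z‖ ^ (-2 * α - 2) * ‖P z‖ ^ 2) with hF
  have hFmeas : Measurable (S.indicator F) := by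
    rw [← piecewise_eq_indicator]
    refine ContinuousOn.measurable_piecewise ?_ continuousOn_const hSm
    refine ENNReal.continuous_ofReal.comp_continuousOn (ContinuousOn.mul ?_ ?_)
    · exact continuous_norm.continuousOn.rpow_const fun z hz => Or.inl (hρ.trans hz.1).ne'
    · exact ((hPd.continuousOn.mono hSball).norm).pow 2
  have hg' : ∀ z ∈ S, HasDerivAt g (exp (L z) * (1 + z * deriv L z)) z := by
    intro z hz
    have e1 := (hL.differentiableAt (isOpen_ball.mem_nhds (hSball hz))).hasDerivAt
    have e2 := (hasDerivAt_id z).mul e1.cexp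
    refine HasDerivAt.congr_of_eventuallyEq ?_
      (Filter.eventually_of_mem (isOpen_ball.mem_nhds (hSball hz)) hgL)
    convert! e2 using 1
    simp
    ring
  have himage : g '' S ⊆ {w : ℂ | ‖w‖ ∈ Ici m} := by
    rintro _ ⟨z, hz, rfl⟩
    by_contra hlt
    have hlt : g z ∈ ball (0 : ℂ) m := by simpa using hlt
    have hg0 : g 0 = 0 := by simp [hgL 0 h0mem]
    obtain ⟨y, hy, hyz⟩ := ball_subset_image_ball hρ hρ1 hm0 hd hinj hg0 hm hlt
    have hyz := hinj (ball_subset_ball hρ1.le hy) (hSball hz) hyz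
    rw [hyz] at hy
    exact absurd hz.1 (not_lt.2 (by simpa using (mem_ball_zero_iff.1 hy).le))
  have harea : ∫⁻ z in S, F z ≤ ENNReal.ofReal (2 * Real.pi * (m ^ (-2 * α) / (2 * α))) := by
    rw [← setLIntegral_norm_rpow hα hm0]
    refine le_trans (le_of_eq ?_) (lintegral_mono_set himage)
    rw [lintegral_image_eq_lintegral_norm_deriv_sq_mul hSm hg' (hinj.mono hSball)]
    refine setLIntegral_congr_fun hSm fun z hz => ?_
    have hz0 : 0 < ‖z‖ := hρ.trans hz.1
    simp only [hF, hP]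
    rw [← ENNReal.ofReal_mul (by positivity), hgL z (hSball hz)]
    congr 1
    simp only [norm_mul, Complex.norm_exp, mul_pow]
    rw [Real.mul_rpow hz0.le (Real.exp_pos _).le, ← Real.exp_mul, ← Real.exp_nat_mul,
      ← Real.exp_nat_mul]
    have : Real.exp ((2 : ℕ) * (-(α : ℂ) * L z).re) =
        Real.exp ((2 : ℕ) * (L z).re) * Real.exp ((L z).re * (-2 * α - 2)) := by
      rw [← Real.exp_add]
      congr 1
      simp
      ring
    rw [this]
    ring
  set c := ‖deriv L 0‖ with hc
  set h : ℝ → ℝ := fun r =>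
    2 * Real.pi * (r ^ (-2 * α - 1) + (1 - α) ^ 2 * c ^ 2 * r ^ (1 - 2 * α)) with hh
  have hcont : ContinuousOn h (Icc ρ 1) := by
    have : ∀ p : ℝ, ContinuousOn (fun r : ℝ => r ^ p) (Icc ρ 1) := fun p =>
      continuousOn_id.rpow_const fun r hr => Or.inl (hρ.trans_le hr.1).ne'
    have h1 := this (-2 * α - 1)
    have h2 := this (1 - 2 * α)
    rw [hh]; fun_prop
  have hlower : ENNReal.ofReal (∫ r in ρ..1, h r) ≤ ∫⁻ z in S, F z := by
    rw [setLIntegral_norm_preimage_eq_polar measurableSet_Ioo (fun r hr => hρ.trans hr.1) F hFmeas,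
      intervalIntegral.integral_of_le hρ1.le, integral_Ioc_eq_integral_Ioo,
      ofReal_integral_eq_lintegral_ofReal]
    · refine setLIntegral_mono' measurableSet_Ioo fun r hr => ?_
      have hr0 : 0 < r := hρ.trans hr.1
      have key := le_lintegral_norm_sq_circleMap hPd hP0 hr0 hr.2
      have hFr : ∀ θ, F (circleMap 0 r θ) = ENNReal.ofReal (r ^ (-2 * α - 2)) *
          ENNReal.ofReal (‖P (circleMap 0 r θ)‖ ^ 2) := fun θ => by
        simp only [hF, norm_circleMap_zero, abs_of_pos hr0]
        rw [ENNReal.ofReal_mul (by positivity)]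
      simp only [hFr]
      rw [lintegral_const_mul' _ _ ENNReal.ofReal_ne_top]
      refine le_trans (le_of_eq ?_) (mul_le_mul_right (mul_le_mul_right key _) _)
      rw [← ENNReal.ofReal_mul (by positivity), ← ENNReal.ofReal_mul hr0.le]
      congr 1
      rw [hP', norm_mul, norm_real, Real.norm_eq_abs, mul_pow, sq_abs, ← hc]
      simp only [hh]
      rw [show -2 * α - 1 = (-2 * α - 2) + 1 by ring, Real.rpow_add_one hr0.ne',
        show 1 - 2 * α = (-2 * α - 2) + 1 + 1 + 1 by ring, Real.rpow_add_one hr0.ne',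
        Real.rpow_add_one hr0.ne', Real.rpow_add_one hr0.ne']
      ring
    · exact (hcont.integrableOn_Icc).mono_set Ioo_subset_Icc_self
    · exact (ae_restrict_iff' measurableSet_Ioo).2 (ae_of_all _ fun r hr => by
        have : 0 < r := hρ.trans hr.1
        simp only [hh]
        positivity)
  have hfin := (ENNReal.ofReal_le_ofReal_iff (by positivity)).1 (hlower.trans harea)
  have hnot : (0 : ℝ) ∉ uIcc ρ 1 := by
    rw [uIcc_of_le hρ1.le]
    exact fun h => absurd h.1 (not_le.2 hρ)
  have hcalc : ∫ r in ρ..1, h r = 2 * Real.pi * ((ρ ^ (-2 * α) - 1) / (2 * α) +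
      (1 - α) ^ 2 * c ^ 2 * ((1 - ρ ^ (2 - 2 * α)) / (2 - 2 * α))) := by
    have hi : ∀ p : ℝ, IntervalIntegrable (fun r : ℝ => r ^ p) volume ρ 1 := fun p =>
      intervalIntegral.intervalIntegrable_rpow (Or.inr hnot)
    simp only [hh]
    rw [intervalIntegral.integral_const_mul, intervalIntegral.integral_add (hi _)
      ((hi _).const_mul _), intervalIntegral.integral_const_mul,
      integral_rpow (Or.inr ⟨by linarith, hnot⟩), integral_rpow (Or.inr ⟨by linarith, hnot⟩)]
    rw [show -2 * α - 1 + 1 = -2 * α by ring, show 1 - 2 * α + 1 = 2 - 2 * α by ring,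
      Real.one_rpow, Real.one_rpow]
    congr 2
    rw [show -2 * α = -(2 * α) by ring, div_neg, ← neg_div, neg_sub]
  rw [hcalc] at hfin
  have hfin := le_of_mul_le_mul_left hfin (by positivity)
  have hα2 : 0 < 1 - α := by linarith
  have := mul_le_mul_of_nonneg_left hfin (by positivity : 0 ≤ 2 * α)
  have e : 2 * α * ((ρ ^ (-2 * α) - 1) / (2 * α) +
      (1 - α) ^ 2 * c ^ 2 * ((1 - ρ ^ (2 - 2 * α)) / (2 - 2 * α))) =
      ρ ^ (-2 * α) - 1 + α * (1 - α) * c ^ 2 * (1 - ρ ^ (2 - 2 * α)) := by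
    rw [show 2 - 2 * α = 2 * (1 - α) by ring]
    field_simp
  rw [e, mul_div_cancel₀ _ (by positivity)] at this
  linarith

/-- **Bieberbach's inequality** for the second coefficient, in logarithmic form. -/
theorem norm_deriv_log_le_two {g L : ℂ → ℂ} (hd : DifferentiableOn ℂ g (ball 0 1))
    (hinj : InjOn g (ball 0 1)) (hL : DifferentiableOn ℂ L (ball 0 1)) (hL0 : L 0 = 0)
    (hgL : ∀ z ∈ ball (0 : ℂ) 1, g z = z * exp (L z)) : ‖deriv L 0‖ ≤ 2 := by
  set c := ‖deriv L 0‖ with hc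
  have h0mem : (0 : ℂ) ∈ ball (0 : ℂ) 1 := mem_ball_self one_pos
  have hexp : HasDerivAt (fun z => exp (L z)) (deriv L 0) 0 := by
    simpa [hL0] using (hL.differentiableAt (isOpen_ball.mem_nhds h0mem)).hasDerivAt.cexp
  obtain ⟨C, hC0, hC⟩ : ∃ C : ℝ, 0 < C ∧ ∀ᶠ z in 𝓝 (0 : ℂ), ‖exp (L z) - 1‖ ≤ C * ‖z‖ := by
    obtain ⟨C, hC0, hC⟩ := hexp.isBigO_sub.exists_pos
    refine ⟨C, hC0, ?_⟩
    simpa [hL0] using hC.bound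
  obtain ⟨δ, hδ, hball⟩ := Metric.eventually_nhds_iff_ball.1 hC
  have step : ∀ α : ℝ, 0 < α → α < 1 / 2 → α * (1 - α) * c ^ 2 ≤ 1 := by
    intro α hα hα1
    have hev : ∀ᶠ ρ : ℝ in 𝓝[>] 0, α * (1 - α) * c ^ 2 * (1 - ρ ^ (2 - 2 * α)) ≤
        1 + 2 * C * ρ ^ (1 - 2 * α) := by
      have hmem : ∀ᶠ ρ : ℝ in 𝓝[>] 0, ρ ∈ Ioo 0 (min (min δ 1) (1 / (2 * C))) :=
        Ioo_mem_nhdsGT (by positivity)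
      filter_upwards [hmem] with ρ hρ
      obtain ⟨hρ, hρlt⟩ := hρ
      have hρ1 : ρ < 1 := hρlt.trans_le ((min_le_left _ _).trans (min_le_right _ _))
      have hρδ : ρ < δ := hρlt.trans_le ((min_le_left _ _).trans (min_le_left _ _))
      have hρC : C * ρ < 1 / 2 := by
        have := hρlt.trans_le (min_le_right _ _)
        rw [lt_div_iff₀ (by positivity)] at this
        linarith
      have hx : 0 < 1 - C * ρ := by linarith
      have key := area_inequality hd hinj hL hL0 hgL hα (by linarith) hρ hρ1
        (m := ρ * (1 - C * ρ)) (by positivity) (fun z hz => by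
          have hzn : ‖z‖ = ρ := by simpa using hz
          have hz1 := hball z (by simpa [hzn] using hρδ)
          rw [hgL z (by simpa [hzn] using hρ1), norm_mul, hzn]
          rw [hzn] at hz1
          have := norm_sub_norm_le (1 : ℂ) (exp (L z))
          rw [norm_sub_rev, norm_one] at this
          gcongr
          linarith)
      refine key.trans ?_
      rw [Real.mul_rpow hρ.le hx.le]
      have hle : (1 - C * ρ) ^ (-2 * α) ≤ 1 + 2 * C * ρ := by
        calc (1 - C * ρ) ^ (-2 * α) ≤ (1 - C * ρ) ^ (-1 : ℝ) :=
              Real.rpow_le_rpow_of_exponent_ge hx (by nlinarith) (by linarith)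
          _ = (1 - C * ρ)⁻¹ := Real.rpow_neg_one _
          _ ≤ 1 + 2 * C * ρ := by
              rw [inv_le_iff_one_le_mul₀ hx]
              nlinarith [mul_pos hC0 hρ]
      have hp : 0 < ρ ^ (-2 * α) := by positivity
      rw [show 1 - 2 * α = -2 * α + 1 by ring, Real.rpow_add_one hρ.ne']
      nlinarith
    have hpow : ∀ p : ℝ, 0 < p → Tendsto (fun ρ : ℝ => ρ ^ p) (𝓝[>] 0) (𝓝 0) := by
      intro p hp
      have := (Real.continuousAt_rpow_const 0 p (Or.inr hp.le)).tendsto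
      rw [Real.zero_rpow hp.ne'] at this
      exact this.mono_left nhdsWithin_le_nhds
    have hlim := le_of_tendsto_of_tendsto
      (((hpow (2 - 2 * α) (by linarith)).const_sub 1).const_mul (α * (1 - α) * c ^ 2))
      (((hpow (1 - 2 * α) (by linarith)).const_mul (2 * C)).const_add 1) hev
    simpa using hlim
  have hlim : (1 / 2 : ℝ) * (1 - 1 / 2) * c ^ 2 ≤ 1 := by
    have ht : Tendsto (fun α : ℝ => α * (1 - α) * c ^ 2) (𝓝[<] (1 / 2))
        (𝓝 ((1 / 2 : ℝ) * (1 - 1 / 2) * c ^ 2)) :=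
      ((by fun_prop : Continuous fun α : ℝ => α * (1 - α) * c ^ 2).tendsto _).mono_left
        nhdsWithin_le_nhds
    refine le_of_tendsto ht ?_
    filter_upwards [Ioo_mem_nhdsLT (by norm_num : (0 : ℝ) < 1 / 2)] with α hα
    exact step α hα.1 hα.2
  nlinarith [norm_nonneg (deriv L 0)]

/-- **Bieberbach's inequality** for the second coefficient of a univalent function. -/
theorem norm_deriv_deriv_zero_le {g : ℂ → ℂ} (hd : DifferentiableOn ℂ g (ball 0 1))
    (hinj : InjOn g (ball 0 1)) (h1 : deriv g 0 ≠ 0) :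
    ‖deriv (deriv g) 0‖ ≤ 4 * ‖deriv g 0‖ := by
  have h0mem : (0 : ℂ) ∈ ball (0 : ℂ) 1 := mem_ball_self one_pos
  set a := deriv g 0 with ha
  set k : ℂ → ℂ := fun z => a⁻¹ * (g z - g 0) with hk
  have hkd : DifferentiableOn ℂ k (ball 0 1) := by rw [hk]; fun_prop
  have hkinj : InjOn k (ball 0 1) := fun x hx y hy hxy =>
    hinj hx hy (sub_left_injective (mul_left_cancel₀ (inv_ne_zero h1) hxy))
  have hkder : deriv k = fun z => a⁻¹ * deriv g z := by
    funext z
    simp only [hk]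
    rw [deriv_const_mul_field, deriv_sub_const]
  have hk1 : deriv k 0 = 1 := by simp only [hkder]; exact inv_mul_cancel₀ h1
  obtain ⟨L, hL, hL0, hgL⟩ := exists_eq_mul_exp hkd hkinj (by simp [hk]) hk1
  have hbound := norm_deriv_log_le_two hkd hkinj hL hL0 hgL
  have hL' : DifferentiableOn ℂ (deriv L) (ball 0 1) := hL.deriv isOpen_ball
  have hder : deriv k =ᶠ[𝓝 0] fun z => exp (L z) * (1 + z * deriv L z) := by
    filter_upwards [isOpen_ball.mem_nhds h0mem] with z hz
    have e1 := (hL.differentiableAt (isOpen_ball.mem_nhds hz)).hasDerivAt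
    have e2 := (hasDerivAt_id z).mul e1.cexp
    refine (HasDerivAt.congr_of_eventuallyEq e2
      (Filter.eventually_of_mem (isOpen_ball.mem_nhds hz) hgL)).deriv.trans ?_
    simp
    ring
  have hsecond : deriv (deriv k) 0 = 2 * deriv L 0 := by
    rw [hder.deriv_eq]
    have e1 := (hL.differentiableAt (isOpen_ball.mem_nhds h0mem)).hasDerivAt
    have e2 := (hL'.differentiableAt (isOpen_ball.mem_nhds h0mem)).hasDerivAt
    refine (e1.cexp.mul (((hasDerivAt_id (0 : ℂ)).mul e2).const_add 1)).deriv.trans ?_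
    simp [hL0]
    ring
  rw [hkder, deriv_const_mul_field] at hsecond
  rw [inv_mul_eq_iff_eq_mul₀ h1] at hsecond
  rw [hsecond, norm_mul, norm_mul, Complex.norm_ofNat]
  nlinarith [norm_nonneg a]

/-- Bieberbach's inequality transported to an arbitrary point by a disc automorphism. -/
theorem norm_koebe_transform_le {g : ℂ → ℂ} (hd : DifferentiableOn ℂ g (ball 0 1))
    (hinj : InjOn g (ball 0 1)) {a : ℂ} (ha : ‖a‖ < 1) (h1 : deriv g a ≠ 0) :
    ‖(1 - ‖a‖ ^ 2) * deriv (deriv g) a - 2 * (starRingEnd ℂ) a * deriv g a‖ ≤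
      4 * ‖deriv g a‖ := by
  have h0mem : (0 : ℂ) ∈ ball (0 : ℂ) 1 := mem_ball_self one_pos
  set b := (starRingEnd ℂ) a with hb
  have hbn : ‖b‖ = ‖a‖ := RCLike.norm_conj a
  set s : ℂ := 1 - (‖a‖ : ℂ) ^ 2 with hs
  have hab : a * b = (‖a‖ : ℂ) ^ 2 := Complex.mul_conj' a
  have hsr : s = ((1 - ‖a‖ ^ 2 : ℝ) : ℂ) := by simp [hs]
  have hspos : 0 < 1 - ‖a‖ ^ 2 := by nlinarith [norm_nonneg a]
  have hs0 : s ≠ 0 := by rw [hsr]; exact_mod_cast hspos.ne'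
  have hden : ∀ z ∈ ball (0 : ℂ) 1, 1 + b * z ≠ 0 := by
    intro z hz h
    have hz : ‖z‖ < 1 := by simpa using hz
    have h2 : ‖b * z‖ = 1 := by rw [← norm_neg, ← eq_neg_of_add_eq_zero_left h, norm_one]
    rw [norm_mul, hbn] at h2
    nlinarith [norm_nonneg a, norm_nonneg z]
  set T : ℂ → ℂ := fun z => (z + a) / (1 + b * z) with hT
  have hTd : ∀ z ∈ ball (0 : ℂ) 1, HasDerivAt T (s / (1 + b * z) ^ 2) z := by
    intro z hz
    have := ((hasDerivAt_id z).add_const a).div (((hasDerivAt_id z).const_mul b).const_add 1)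
      (hden z hz)
    convert! this using 1
    congr 1
    simp only [hs, ← hab, id]
    ring
  have hTmaps : MapsTo T (ball 0 1) (ball 0 1) := by
    intro z hz
    have hzn : ‖z‖ < 1 := by simpa using hz
    rw [mem_ball_zero_iff, hT]
    simp only [norm_div]
    rw [div_lt_one (norm_pos_iff.2 (hden z hz))]
    refine lt_of_pow_lt_pow_left₀ 2 (norm_nonneg _) ?_
    have hz2 : ‖z‖ ^ 2 < 1 := by nlinarith [norm_nonneg z]
    have := mul_pos hspos (sub_pos.2 hz2)
    simp only [Complex.sq_norm, normSq_apply, hb, add_re, add_im, mul_re, mul_im, one_re, one_im,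
      conj_re, conj_im] at this ⊢
    nlinarith
  have hTinj : InjOn T (ball 0 1) := by
    intro x hx y hy hxy
    simp only [hT] at hxy
    rw [div_eq_div_iff (hden x hx) (hden y hy)] at hxy
    have : s * (x - y) = 0 := by rw [hs, ← hab]; linear_combination hxy
    exact sub_eq_zero.1 ((mul_eq_zero.1 this).resolve_left hs0)
  have hT0 : T 0 = a := by simp [hT]
  have hgd : ∀ z ∈ ball (0 : ℂ) 1, HasDerivAt g (deriv g z) z := fun z hz =>
    (hd.differentiableAt (isOpen_ball.mem_nhds hz)).hasDerivAt
  have hcomp : ∀ z ∈ ball (0 : ℂ) 1,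
      HasDerivAt (g ∘ T) (deriv g (T z) * (s / (1 + b * z) ^ 2)) z := fun z hz =>
    (hgd _ (hTmaps hz)).comp z (hTd z hz)
  have hk1 : deriv (g ∘ T) 0 = deriv g a * s := by
    rw [(hcomp 0 h0mem).deriv, hT0]; simp
  have hk2 : deriv (deriv (g ∘ T)) 0 = s * (s * deriv (deriv g) a - 2 * b * deriv g a) := by
    have hev : deriv (g ∘ T) =ᶠ[𝓝 0] fun z => deriv g (T z) * (s / (1 + b * z) ^ 2) :=
      Filter.eventually_of_mem (isOpen_ball.mem_nhds h0mem) fun z hz => (hcomp z hz).deriv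
    rw [hev.deriv_eq]
    have e1 : HasDerivAt (deriv g) (deriv (deriv g) a) (T 0) := by
      rw [hT0]
      exact ((hd.deriv isOpen_ball).differentiableAt (isOpen_ball.mem_nhds (by simpa))).hasDerivAt
    have e2 := e1.comp 0 (hTd 0 h0mem)
    have e3 := (hasDerivAt_const (0 : ℂ) s).div
      ((((hasDerivAt_id (0 : ℂ)).const_mul b).const_add 1).pow 2) (by simp)
    refine (e2.mul e3).deriv.trans ?_
    simp [hT0]
    ring
  have hmain := norm_deriv_deriv_zero_le (g := g ∘ T)
    (fun z hz => (hcomp z hz).differentiableAt.differentiableWithinAt)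
    (hinj.comp hTinj hTmaps) (by rw [hk1]; exact mul_ne_zero h1 hs0)
  rw [hk1, hk2, norm_mul, norm_mul] at hmain
  exact le_of_mul_le_mul_left (by linarith) (norm_pos_iff.2 hs0)

/-- **Koebe distortion theorem**, upper bound. -/
theorem norm_deriv_le_of_injOn {g : ℂ → ℂ} (hd : DifferentiableOn ℂ g (ball 0 1))
    (hinj : InjOn g (ball 0 1)) {e : ℂ} (he : ‖e‖ = 1) {r : ℝ} (hr : 0 ≤ r) (hr1 : r < 1) :
    ‖deriv g (r * e)‖ ≤ ‖deriv g 0‖ * ((1 + r) / (1 - r) ^ 3) := by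
  set φ : ℝ → ℝ := fun t => normSq (deriv g (t * e)) * ((1 - t) ^ 6 / (1 + t) ^ 2) with hφ
  have hmem : ∀ t ∈ Icc 0 r, (t * e : ℂ) ∈ ball (0 : ℂ) 1 := fun t ht => by
    simpa [he, abs_of_nonneg ht.1] using ht.2.trans_lt hr1
  have hder : ∀ t ∈ Icc 0 r, HasDerivAt φ
      (2 * ((starRingEnd ℂ) (deriv g (t * e)) * (e * deriv (deriv g) (t * e))).re *
          ((1 - t) ^ 6 / (1 + t) ^ 2) + normSq (deriv g (t * e)) *
        (-(2 * (1 - t) ^ 5 * (2 * t + 4)) / (1 + t) ^ 3)) t := by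
    intro t ht
    have ht0 : (0 : ℝ) < 1 + t := by linarith [ht.1]
    have e1 : HasDerivAt (deriv g) (deriv (deriv g) (t * e)) (t * e) :=
      ((hd.deriv isOpen_ball).differentiableAt (isOpen_ball.mem_nhds (hmem t ht))).hasDerivAt
    have e2 : HasDerivAt (fun z : ℂ => deriv g (z * e)) (deriv (deriv g) (t * e) * e) (t : ℂ) := by
      have := e1.comp (t : ℂ) ((hasDerivAt_id (t : ℂ)).mul_const e)
      simpa [Function.comp_def] using this
    have e3 := e2.comp_ofReal.norm_sq
    simp only [← normSq_eq_norm_sq, Complex.inner] at e3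
    have e4 := (((hasDerivAt_id t).const_sub 1).pow 6).div
      (((hasDerivAt_id t).const_add 1).pow 2) (pow_ne_zero 2 ht0.ne')
    convert! e3.mul e4 using 1
    rw [mul_comm ((starRingEnd ℂ) (deriv g (t * e))), mul_comm e]
    generalize (deriv (deriv g) (t * e) * e * (starRingEnd ℂ) (deriv g (t * e))).re = x
    simp only [Pi.div_apply, Pi.pow_apply, id]
    field_simp
    push_cast
    ring
  have hanti : AntitoneOn φ (Icc 0 r) := by
    refine antitoneOn_of_deriv_nonpos (convex_Icc 0 r)
      (fun t ht => (hder t ht).continuousAt.continuousWithinAt)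
      (fun t ht => (hder t (interior_subset ht)).differentiableAt.differentiableWithinAt)
      fun t ht => ?_
    have ht := interior_subset ht
    rw [(hder t ht).deriv]
    have ht0 : (0 : ℝ) ≤ t := ht.1
    have ht1 : t < 1 := ht.2.trans_lt hr1
    set a : ℂ := t * e with ha
    have han : ‖a‖ = t := by simp [ha, he, abs_of_nonneg ht0]
    by_cases hz : deriv g a = 0
    · simp [hz]
    have hk := norm_koebe_transform_le hd hinj (han ▸ ht1) hz
    rw [han] at hk
    set u := deriv g a
    set v := deriv (deriv g) a
    have hee : e * (starRingEnd ℂ) a = t := by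
      rw [ha, map_mul, conj_ofReal, mul_left_comm, Complex.mul_conj', he]; simp
    have hre : (1 - t ^ 2) * ((starRingEnd ℂ) u * (e * v)).re - 2 * t * normSq u ≤
        4 * normSq u := by
      calc _ = ((starRingEnd ℂ) u * e *
            ((1 - t ^ 2) * v - 2 * (starRingEnd ℂ) a * u)).re := by
            rw [show (starRingEnd ℂ) u * e * ((1 - (t : ℂ) ^ 2) * v - 2 * (starRingEnd ℂ) a * u) =
              ((1 - t ^ 2 : ℝ) : ℂ) * ((starRingEnd ℂ) u * (e * v)) -
                ((2 * t * normSq u : ℝ) : ℂ) by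
                push_cast
                rw [normSq_eq_conj_mul_self]
                linear_combination (-2 * (starRingEnd ℂ) u * u) * hee]
            rw [sub_re, re_ofReal_mul, ofReal_re]
        _ ≤ ‖(starRingEnd ℂ) u * e * ((1 - t ^ 2) * v - 2 * (starRingEnd ℂ) a * u)‖ := re_le_norm _
        _ ≤ ‖u‖ * (4 * ‖u‖) := by
            rw [norm_mul, norm_mul, RCLike.norm_conj, he, mul_one]
            gcongr
        _ = _ := by rw [normSq_eq_norm_sq]; ring
    have hsub : 0 < 1 - t := by linarith
    have hadd : 0 < 1 + t := by linarith
    set x := ((starRingEnd ℂ) u * (e * v)).re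
    have : 2 * x * ((1 - t) ^ 6 / (1 + t) ^ 2) +
        normSq u * (-(2 * (1 - t) ^ 5 * (2 * t + 4)) / (1 + t) ^ 3) =
        2 * (1 - t) ^ 5 / (1 + t) ^ 3 * ((1 - t ^ 2) * x - 2 * t * normSq u - 4 * normSq u) := by
      field_simp
      ring
    rw [this]
    exact mul_nonpos_of_nonneg_of_nonpos (by positivity) (by linarith)
  have hle := hanti (left_mem_Icc.2 hr) (right_mem_Icc.2 hr) hr
  simp only [hφ, normSq_eq_norm_sq] at hle
  have hsub : 0 < 1 - r := by linarith
  have hadd : 0 < 1 + r := by linarith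
  refine le_of_sq_le_sq ?_ (by positivity)
  simp only [ofReal_zero, zero_mul, sub_zero, one_pow, add_zero, div_one, mul_one] at hle
  calc ‖deriv g (r * e)‖ ^ 2 = ‖deriv g (r * e)‖ ^ 2 * ((1 - r) ^ 6 / (1 + r) ^ 2) *
        ((1 + r) / (1 - r) ^ 3) ^ 2 := by field_simp
    _ ≤ ‖deriv g 0‖ ^ 2 * ((1 + r) / (1 - r) ^ 3) ^ 2 := by gcongr
    _ = _ := by ring

/-- **Koebe growth theorem**, upper bound. -/
theorem norm_le_of_injOn {g : ℂ → ℂ} (hd : DifferentiableOn ℂ g (ball 0 1))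
    (hinj : InjOn g (ball 0 1)) (h0 : g 0 = 0) {w : ℂ} (hw : ‖w‖ < 1) :
    ‖g w‖ ≤ ‖deriv g 0‖ * (‖w‖ / (1 - ‖w‖) ^ 2) := by
  rcases eq_or_ne w 0 with rfl | hw0
  · simp [h0]
  set e : ℂ := w / ‖w‖ with he_def
  have hwn : (‖w‖ : ℂ) ≠ 0 := by simpa using hw0
  have he : ‖e‖ = 1 := by simp [he_def, hw0]
  have hwe : (‖w‖ : ℂ) * e = w := by rw [he_def]; field_simp
  have hmem : ∀ t ∈ Icc 0 ‖w‖, (t * e : ℂ) ∈ ball (0 : ℂ) 1 := fun t ht => by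
    simpa [he, abs_of_nonneg ht.1] using ht.2.trans_lt hw
  have hder : ∀ t ∈ Icc 0 ‖w‖, HasDerivAt (fun t : ℝ => g (t * e)) (deriv g (t * e) * e) t := by
    intro t ht
    have e1 := (hd.differentiableAt (isOpen_ball.mem_nhds (hmem t ht))).hasDerivAt
    have e2 : HasDerivAt (fun z : ℂ => g (z * e)) (deriv g (t * e) * e) (t : ℂ) := by
      have := HasDerivAt.comp (t : ℂ) e1 ((hasDerivAt_id (t : ℂ)).mul_const e)
      simpa [Function.comp_def] using this
    exact e2.comp_ofReal
  have hB : ∀ t ∈ Icc 0 ‖w‖, HasDerivAt (fun t : ℝ => ‖deriv g 0‖ * (t / (1 - t) ^ 2))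
      (‖deriv g 0‖ * ((1 + t) / (1 - t) ^ 3)) t := by
    intro t ht
    have hs : 1 - t ≠ 0 := by linarith [ht.2]
    refine HasDerivAt.const_mul _ ?_
    convert! (hasDerivAt_id t).div (((hasDerivAt_id t).const_sub 1).pow 2) (pow_ne_zero 2 hs) using 1
    simp
    field_simp
    ring
  have := image_norm_le_of_norm_deriv_right_le_deriv_boundary' (a := 0) (b := ‖w‖)
    (fun t ht => (hder t ht).continuousAt.continuousWithinAt)
    (fun t ht => (hder t (Ico_subset_Icc_self ht)).hasDerivWithinAt)
    (B := fun t : ℝ => ‖deriv g 0‖ * (t / (1 - t) ^ 2)) (by simp [h0])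
    (fun t ht => (hB t ht).continuousAt.continuousWithinAt)
    (fun t ht => (hB t (Ico_subset_Icc_self ht)).hasDerivWithinAt)
    (fun t ht => by
      rw [norm_mul, he, mul_one]
      exact norm_deriv_le_of_injOn hd hinj he ht.1 (ht.2.trans hw))
    (right_mem_Icc.2 (norm_nonneg w))
  rwa [hwe] at this

/-- **Pick's growth theorem** for bounded univalent functions. -/
theorem norm_div_sq_le_of_injOn_of_mapsTo {f : ℂ → ℂ} (hd : DifferentiableOn ℂ f (ball (0 : ℂ) 1))
    (hmaps : Set.MapsTo f (ball (0 : ℂ) 1) (ball (0 : ℂ) 1))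
    (hinj : Set.InjOn f (ball (0 : ℂ) 1))
    (h0 : f 0 = 0) {w : ℂ} (hw : w ∈ ball (0 : ℂ) 1) (hw0 : w ≠ 0) :
    ‖f w‖ / (1 - ‖f w‖) ^ 2 ≤ ‖deriv f 0‖ * (‖w‖ / (1 - ‖w‖) ^ 2) := by
  have h0mem : (0 : ℂ) ∈ ball (0 : ℂ) 1 := mem_ball_self one_pos
  have hfw : f w ≠ 0 := fun h => hw0 (hinj hw h0mem (h.trans h0.symm))
  have hfwn : (‖f w‖ : ℂ) ≠ 0 := by simpa using hfw
  set e : ℂ := (starRingEnd ℂ) (f w) / ‖f w‖ with he_def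
  have he : ‖e‖ = 1 := by simp [he_def, hfw]
  have hef : e * f w = ‖f w‖ := by
    rw [he_def, div_mul_eq_mul_div, Complex.conj_mul']; field_simp
  have hlt : ∀ z ∈ ball (0 : ℂ) 1, ‖e * f z‖ < 1 := fun z hz => by
    rw [norm_mul, he, one_mul]; simpa using hmaps hz
  have hden : ∀ z ∈ ball (0 : ℂ) 1, 1 - e * f z ≠ 0 := fun z hz h => by
    have := hlt z hz
    rw [← sub_eq_zero.1 h, norm_one] at this
    exact lt_irrefl _ this
  set g : ℂ → ℂ := fun z => f z / (1 - e * f z) ^ 2 with hg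
  have hgd : DifferentiableOn ℂ g (ball 0 1) :=
    hd.div (((hd.const_mul e).const_sub 1).pow 2) fun z hz => pow_ne_zero 2 (hden z hz)
  have hginj : InjOn g (ball 0 1) := by
    intro x hx y hy hxy
    simp only [hg] at hxy
    rw [div_eq_div_iff (pow_ne_zero 2 (hden x hx)) (pow_ne_zero 2 (hden y hy))] at hxy
    have hfac : (f x - f y) * (1 - (e * f x) * (e * f y)) = 0 := by linear_combination hxy
    rcases mul_eq_zero.1 hfac with h | h
    · exact hinj hx hy (sub_eq_zero.1 h)
    · have h2 := congrArg norm (sub_eq_zero.1 h)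
      rw [norm_one, norm_mul] at h2
      nlinarith [hlt x hx, hlt y hy, norm_nonneg (e * f x), norm_nonneg (e * f y)]
  have hg' : deriv g 0 = deriv f 0 := by
    have e1 := (hd.differentiableAt (isOpen_ball.mem_nhds h0mem)).hasDerivAt
    refine (e1.div (((e1.const_mul e).const_sub 1).pow 2)
      (pow_ne_zero 2 (hden 0 h0mem))).deriv.trans ?_
    simp [h0]
  have hmain := norm_le_of_injOn hgd hginj (by simp [hg, h0]) (mem_ball_zero_iff.1 hw)
  rw [hg'] at hmain
  refine le_trans (le_of_eq ?_) hmain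
  simp only [hg]
  have hpos : 0 < 1 - ‖f w‖ := by
    have := hlt w hw
    rw [norm_mul, he, one_mul] at this
    linarith
  rw [hef, norm_div, norm_pow, ← ofReal_one, ← ofReal_sub, norm_real, Real.norm_eq_abs,
    abs_of_pos hpos]

/-- The functional `I_upper` is nonpositive. -/
theorem stmt11 (f : ℂ → ℂ) (hd : DifferentiableOn ℂ f (ball (0 : ℂ) 1))
    (hmaps : Set.MapsTo f (ball (0 : ℂ) 1) (ball (0 : ℂ) 1))
    (hinj : Set.InjOn f (ball (0 : ℂ) 1))
    (h0 : f 0 = 0) (w : ℂ) (hw : w ∈ ball (0 : ℂ) 1) (hw0 : w ≠ 0) :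
    Real.log (‖f w‖ / (1 - ‖f w‖) ^ 2 * ((1 - ‖w‖) ^ 2 / (‖w‖ * ‖deriv f 0‖))) ≤ 0 := by
  have hmain := norm_div_sq_le_of_injOn_of_mapsTo hd hmaps hinj h0 hw hw0
  refine Real.log_nonpos (by positivity) ?_
  have hwn : 0 < ‖w‖ := norm_pos_iff.2 hw0
  have hsub : 0 < 1 - ‖w‖ := by linarith [mem_ball_zero_iff.1 hw]
  calc _ ≤ ‖deriv f 0‖ * (‖w‖ / (1 - ‖w‖) ^ 2) * ((1 - ‖w‖) ^ 2 / (‖w‖ * ‖deriv f 0‖)) := by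
        gcongr
    _ = ‖deriv f 0‖ / ‖deriv f 0‖ := by field_simp
    _ ≤ 1 := div_self_le_one _
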